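/- Let F be a finite field with |F| = q. For every vertex v of the symplectic graph Sp(4,q), the subgraph induced on the set of vertices that are distinct from v and not adjacent to v (the second subconstituent, which has q³ vertices) is a distance-regular graph with intersection array {q²−1, q²−q, 1; 1, q, q²−1}. -/

import Mathlib

open scoped Classical LinearAlgebra.Projectivization

/-- The symplectic form on `F^4` given by `u₀w₁ − u₁w₀ + u₂w₃ − u₃w₂`. -/
def sympForm {F : Type} [Field F] (u w : Fin 4 → F) : F :=
  u 0 * w 1 - u 1 * w 0 + u 2 * w 3 - u 3 * w 2

/-- The symplectic graph `Sp(4,q)`. -/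
def spGraph (F : Type) [Field F] : SimpleGraph (ℙ F (Fin 4 → F)) :=
  SimpleGraph.fromRel (fun x y => sympForm x.rep y.rep = 0)

noncomputable instance (F : Type) [Field F] [Fintype F] : Fintype (ℙ F (Fin 4 → F)) :=
  have : Finite (ℙ F (Fin 4 → F)) := Quotient.finite _
  Fintype.ofFinite _

/-- `H` is a connected distance-regular graph of diameter 3 with intersection array
`{b₀, b₁, b₂; c₁, c₂, c₃}`: every vertex has degree `b₀`, and for vertices `u, w` at
distance `i` (for `1 ≤ i ≤ 3`), `w` has exactly `cᵢ` neighbours at distance `i − 1`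
from `u` and exactly `bᵢ` neighbours at distance `i + 1` from `u` (with `b₃ = 0`). -/
def IsDRG3 {V : Type*} (H : SimpleGraph V) (b0 b1 b2 c1 c2 c3 : ℕ) : Prop :=
  H.Connected ∧ (∀ u w : V, H.dist u w ≤ 3) ∧ (∃ u w : V, H.dist u w = 3) ∧
  (∀ x : V, (H.neighborSet x).ncard = b0) ∧
  (∀ u w : V, H.dist u w = 1 →
    {y | H.Adj w y ∧ H.dist u y = 0}.ncard = c1 ∧
    {y | H.Adj w y ∧ H.dist u y = 2}.ncard = b1) ∧
  (∀ u w : V, H.dist u w = 2 →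
    {y | H.Adj w y ∧ H.dist u y = 1}.ncard = c2 ∧
    {y | H.Adj w y ∧ H.dist u y = 3}.ncard = b2) ∧
  (∀ u w : V, H.dist u w = 3 →
    {y | H.Adj w y ∧ H.dist u y = 2}.ncard = c3 ∧
    {y | H.Adj w y ∧ H.dist u y = 4}.ncard = 0)


theorem sf_smul {F : Type} [Field F] (s t : F) (u w : Fin 4 → F) :
    sympForm (s • u) (t • w) = s * t * sympForm u w := by
  simp [sympForm]; ring

theorem sf_comm {F : Type} [Field F] (u w : Fin 4 → F) :
    sympForm u w = - sympForm w u := by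
  simp [sympForm]; ring

theorem sf_rep {F : Type} [Field F] (u w : Fin 4 → F) (hu : u ≠ 0) (hw : w ≠ 0) :
    sympForm (Projectivization.mk F u hu).rep (Projectivization.mk F w hw).rep = 0 ↔
      sympForm u w = 0 := by
  obtain ⟨a, ha⟩ := Projectivization.exists_smul_eq_mk_rep F u hu
  obtain ⟨b, hb⟩ := Projectivization.exists_smul_eq_mk_rep F w hw
  rw [← ha, ← hb, Units.smul_def, Units.smul_def, sf_smul]
  simp

theorem sp_adj {F : Type} [Field F] (u w : Fin 4 → F) (hu : u ≠ 0) (hw : w ≠ 0) :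
    (spGraph F).Adj (Projectivization.mk F u hu) (Projectivization.mk F w hw) ↔
      Projectivization.mk F u hu ≠ Projectivization.mk F w hw ∧ sympForm u w = 0 := by
  unfold spGraph
  rw [SimpleGraph.fromRel_adj, sf_rep, sf_rep, sf_comm w u]
  simp

theorem exists_basis {F : Type} [Field F] (v : Fin 4 → F) (hv : v ≠ 0) :
    ∃ w f g : Fin 4 → F, sympForm v w = 1 ∧ sympForm v f = 0 ∧ sympForm v g = 0 ∧
      sympForm w f = 0 ∧ sympForm w g = 0 ∧ sympForm f g = 1 ∧
      ∀ x : Fin 4 → F, x = sympForm x w • v + sympForm v x • w + sympForm x g • f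
        + sympForm f x • g := by
  by_cases h0 : v 0 = 0
  · by_cases h1 : v 1 = 0
    · by_cases h2 : v 2 = 0
      · have h3 : v 3 ≠ 0 := by
          intro h3; apply hv; ext i; fin_cases i <;> simp_all
        refine ⟨![0, 0, -(v 3)⁻¹, 0], ![1, 0, -v 1 * (v 3)⁻¹, 0], ![0, 1, v 0 * (v 3)⁻¹, 0],
          ?_, ?_, ?_, ?_, ?_, ?_, ?_⟩
        on_goal 7 => intro x; ext i; fin_cases i
        all_goals simp [sympForm, Matrix.vecHead, Matrix.vecTail]
        all_goals field_simp
        all_goals ring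
      · refine ⟨![0, 0, 0, (v 2)⁻¹], ![1, 0, 0, v 1 * (v 2)⁻¹], ![0, 1, 0, -v 0 * (v 2)⁻¹],
          ?_, ?_, ?_, ?_, ?_, ?_, ?_⟩
        on_goal 7 => intro x; ext i; fin_cases i
        all_goals simp [sympForm, Matrix.vecHead, Matrix.vecTail]
        all_goals field_simp
        all_goals ring
    · refine ⟨![-(v 1)⁻¹, 0, 0, 0], ![-v 3 * (v 1)⁻¹, 0, 1, 0], ![v 2 * (v 1)⁻¹, 0, 0, 1],
          ?_, ?_, ?_, ?_, ?_, ?_, ?_⟩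
      on_goal 7 => intro x; ext i; fin_cases i
      all_goals simp [sympForm, Matrix.vecHead, Matrix.vecTail]
      all_goals field_simp
      all_goals ring
  · refine ⟨![0, (v 0)⁻¹, 0, 0], ![0, v 3 * (v 0)⁻¹, 1, 0], ![0, -v 2 * (v 0)⁻¹, 0, 1],
          ?_, ?_, ?_, ?_, ?_, ?_, ?_⟩
    on_goal 7 => intro x; ext i; fin_cases i
    all_goals simp [sympForm, Matrix.vecHead, Matrix.vecTail]
    all_goals field_simp
    all_goals ring

def bf {F : Type} [Field F] (x y : F × F × F) : F :=
  x.1 - y.1 + x.2.1 * y.2.2 - x.2.2 * y.2.1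

theorem bf_self {F : Type} [Field F] (x : F × F × F) : bf x x = 0 := by
  simp [bf]; ring

theorem bf_comm {F : Type} [Field F] (x y : F × F × F) : bf x y = - bf y x := by
  simp [bf]; ring

def hG (F : Type) [Field F] : SimpleGraph (F × F × F) where
  Adj x y := x ≠ y ∧ bf x y = 0
  symm := ⟨fun x y h => ⟨h.1.symm, by rw [bf_comm, h.2, neg_zero]⟩⟩
  loopless := ⟨fun x h => h.1 rfl⟩

theorem hG_adj {F : Type} [Field F] (x y : F × F × F) :
    (hG F).Adj x y ↔ x ≠ y ∧ bf x y = 0 := Iff.rfl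

theorem fib_eq {F : Type} [Field F] {x y : F × F × F} (h : x.2 = y.2) (z : F × F × F)
    (h1 : bf x z = 0) (h2 : bf y z = 0) : x = y := by
  obtain ⟨a, b, c⟩ := x
  obtain ⟨a', b', c'⟩ := y
  simp only [Prod.mk.injEq] at h
  obtain ⟨rfl, rfl⟩ := h
  simp only [bf] at h1 h2
  have : a = a' := by linear_combination h1 - h2
  rw [this]

theorem card_nb {F : Type} [Field F] [Fintype F] (w : F × F × F) :
    {y | bf w y = 0}.ncard = Fintype.card F ^ 2 := by
  have : {y | bf w y = 0} = (fun p : F × F => (w.1 + w.2.1 * p.2 - w.2.2 * p.1, p)) '' Set.univ := by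
    ext ⟨a, b, c⟩
    simp only [bf, Set.mem_ofPred_eq, Set.image_univ, Set.mem_range, Prod.mk.injEq]
    constructor
    · intro h
      exact ⟨(b, c), by linear_combination h, rfl⟩
    · rintro ⟨p, h, rfl⟩
      simp only at h
      linear_combination h
  rw [this, Set.ncard_image_of_injective _ (fun p p' h => (Prod.mk.inj h).2), Set.ncard_univ]
  simp [sq]

theorem card_common {F : Type} [Field F] [Fintype F] (u w : F × F × F) (h : u.2 ≠ w.2) :
    {y | bf w y = 0 ∧ bf u y = 0}.ncard = Fintype.card F := by
  obtain ⟨a, b, c⟩ := u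
  obtain ⟨a', b', c'⟩ := w
  by_cases hb : b = b'
  · subst hb
    have hc : c - c' ≠ 0 := fun e => h (by simp [sub_eq_zero.1 e])
    have : {y | bf (a', b, c') y = 0 ∧ bf (a, b, c) y = 0} =
        (fun t : F => (a' + b * t - c' * ((a - a') / (c - c')), (a - a') / (c - c'), t)) ''
          Set.univ := by
      ext ⟨x, y, z⟩
      simp only [bf, Set.mem_ofPred_eq, Set.image_univ, Set.mem_range, Prod.mk.injEq]
      constructor
      · rintro ⟨h1, h2⟩
        have hy : (a - a') / (c - c') = y := by
          rw [div_eq_iff hc]; linear_combination h2 - h1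
        refine ⟨z, ?_, hy, rfl⟩
        rw [hy]; linear_combination h1
      · rintro ⟨t, h1, h2, rfl⟩
        rw [h2] at h1
        rw [div_eq_iff hc] at h2
        constructor
        · linear_combination h1
        · linear_combination h1 + h2
    rw [this, Set.ncard_image_of_injective _ (fun p p' h => (Prod.mk.inj (Prod.mk.inj h).2).2), Set.ncard_univ]
    simp
  · have hc : b' - b ≠ 0 := fun e => hb (sub_eq_zero.1 e).symm
    have : {y | bf (a', b', c') y = 0 ∧ bf (a, b, c) y = 0} =
        (fun t : F => (a' + b' * ((a - a' + (c' - c) * t) / (b' - b)) - c' * t, t,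
          (a - a' + (c' - c) * t) / (b' - b))) '' Set.univ := by
      ext ⟨x, y, z⟩
      simp only [bf, Set.mem_ofPred_eq, Set.image_univ, Set.mem_range, Prod.mk.injEq]
      constructor
      · rintro ⟨h1, h2⟩
        have hy : (a - a' + (c' - c) * y) / (b' - b) = z := by
          rw [div_eq_iff hc]; linear_combination h2 - h1
        refine ⟨y, ?_, rfl, hy⟩
        rw [hy]; linear_combination h1
      · rintro ⟨t, h1, rfl, h2⟩
        rw [h2] at h1
        rw [div_eq_iff hc] at h2
        constructor
        · linear_combination h1
        · linear_combination h1 + h2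
    rw [this, Set.ncard_image_of_injective _ (fun p p' h => by
      simp only [Prod.mk.injEq] at h; exact h.2.1), Set.ncard_univ]
    simp

theorem exists_common {F : Type} [Field F] [Fintype F] (u w : F × F × F) (h : u.2 ≠ w.2) :
    ∃ y, bf w y = 0 ∧ bf u y = 0 := by
  have := card_common u w h
  have h2 : {y | bf w y = 0 ∧ bf u y = 0}.Nonempty := by
    rw [← Set.ncard_pos, this]; exact Fintype.card_pos
  exact h2

theorem adj_fib {F : Type} [Field F] {x y : F × F × F} (h : (hG F).Adj x y) : x.2 ≠ y.2 := by
  intro e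
  exact h.1 (fib_eq e y h.2 (bf_self y))

theorem hG_two {F : Type} [Field F] [Fintype F] {x y : F × F × F} (h : x.2 ≠ y.2)
    (hn : bf x y ≠ 0) : ∃ z, (hG F).Adj x z ∧ (hG F).Adj z y := by
  obtain ⟨z, h1, h2⟩ := exists_common x y h
  refine ⟨z, ⟨?_, h2⟩, SimpleGraph.Adj.symm ⟨?_, h1⟩⟩
  · rintro rfl
    rw [bf_comm, h1, neg_zero] at hn; exact hn rfl
  · rintro rfl
    exact hn h2

theorem exists_nb {F : Type} [Field F] (y : F × F × F) : ∃ z, (hG F).Adj z y := by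
  refine ⟨(y.1 + y.2.1 * y.2.2 - y.2.2 * (y.2.1 + 1), y.2.1 + 1, y.2.2), ?_, ?_⟩
  · intro h
    have := congrArg (fun p => p.2.1) h
    simp at this
  · simp only [bf]; ring

theorem hG_conn (F : Type) [Field F] [Fintype F] : (hG F).Connected := by
  have key : ∀ x y : F × F × F, x.2 ≠ y.2 → (hG F).Reachable x y := by
    intro x y h
    by_cases hn : bf x y = 0
    · exact SimpleGraph.Adj.reachable ⟨fun e => h (by rw [e]), hn⟩
    · obtain ⟨z, h1, h2⟩ := hG_two h hn
      exact h1.reachable.trans h2.reachable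
  haveI : Nonempty (F × F × F) := ⟨0⟩
  refine SimpleGraph.Connected.mk fun x y => ?_
  by_cases h : x.2 = y.2
  · obtain ⟨z, hz⟩ := exists_nb y
    exact (key x z (fun e => adj_fib hz (e.symm.trans h))).trans hz.reachable
  · exact key x y h

theorem dist_two {F : Type} [Field F] [Fintype F] {x y : F × F × F} (h : x.2 ≠ y.2)
    (hn : bf x y ≠ 0) : (hG F).dist x y = 2 := by
  obtain ⟨z, h1, h2⟩ := hG_two h hn
  have hle := SimpleGraph.dist_le (SimpleGraph.Walk.cons h1 (SimpleGraph.Walk.cons h2 .nil))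
  have := (hG_conn F).one_lt_dist_of_ne_of_not_adj (u := x) (v := y) (fun e => h (by rw [e]))
    (fun e => hn e.2)
  simp at hle
  omega

theorem dist_three {F : Type} [Field F] [Fintype F] {x y : F × F × F} (h : x.2 = y.2)
    (hn : x ≠ y) : (hG F).dist x y = 3 := by
  obtain ⟨z, hz⟩ := exists_nb y
  have hf : x.2 ≠ z.2 := fun e => adj_fib hz (e.symm.trans h)
  have hxz : bf x z ≠ 0 := fun e => hn (fib_eq h z e hz.symm.2)
  have h1 := dist_two hf hxz
  have h2 := SimpleGraph.dist_eq_one_iff_adj.2 hz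
  have h3 := (hG_conn F).dist_triangle (u := x) (v := z) (w := y)
  have h4 := (hG_conn F).one_lt_dist_of_ne_of_not_adj (u := x) (v := y) hn
    (fun e => adj_fib e h)
  have h5 : (hG F).dist x y ≠ 2 := by
    intro h5
    obtain ⟨p, hp⟩ := (hG_conn F).exists_walk_length_eq_dist x y
    rw [h5] at hp
    match p, hp with
    | .cons (v := t) a (.cons b .nil), _ =>
      exact hn (fib_eq h t a.2 b.symm.2)
  omega

theorem dist_eq_one {F : Type} [Field F] (x y : F × F × F) :
    (hG F).dist x y = 1 ↔ x ≠ y ∧ bf x y = 0 := SimpleGraph.dist_eq_one_iff_adj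

theorem dist_cases {F : Type} [Field F] [Fintype F] (x y : F × F × F) :
    (x = y ∧ (hG F).dist x y = 0) ∨ (x ≠ y ∧ x.2 ≠ y.2 ∧ bf x y = 0 ∧ (hG F).dist x y = 1) ∨
    (x ≠ y ∧ x.2 ≠ y.2 ∧ bf x y ≠ 0 ∧ (hG F).dist x y = 2) ∨
    (x ≠ y ∧ x.2 = y.2 ∧ bf x y ≠ 0 ∧ (hG F).dist x y = 3) := by
  by_cases h : x = y
  · left; exact ⟨h, by rw [h]; simp⟩
  by_cases hf : x.2 = y.2
  · right; right; right
    exact ⟨h, hf, fun e => adj_fib (F := F) ⟨h, e⟩ hf, dist_three hf h⟩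
  by_cases hb : bf x y = 0
  · right; left
    exact ⟨h, hf, hb, (dist_eq_one x y).2 ⟨h, hb⟩⟩
  · right; right; left
    exact ⟨h, hf, hb, dist_two hf hb⟩

theorem hG_drg (F : Type) [Field F] [Fintype F] (q : ℕ) (hq : Fintype.card F = q) :
    IsDRG3 (hG F) (q ^ 2 - 1) (q ^ 2 - q) 1 1 q (q ^ 2 - 1) := by
  subst hq
  have deg : ∀ w : F × F × F, {y | w ≠ y ∧ bf w y = 0}.ncard = Fintype.card F ^ 2 - 1 := by
    intro w
    have : {y | w ≠ y ∧ bf w y = 0} = {y | bf w y = 0} \ {w} := by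
      ext y; simp [and_comm, eq_comm]
    have hm : w ∈ {y | bf w y = 0} := bf_self w
    rw [this, Set.ncard_sdiff_singleton_of_mem hm, card_nb]
  refine ⟨hG_conn F, ?_, ?_, deg, ?_, ?_, ?_⟩
  · intro u w
    rcases dist_cases u w with h | h | h | h <;> omega
  · exact ⟨(0, 0, 0), (1, 0, 0), dist_three rfl (by simp)⟩
  · intro u w h
    obtain ⟨hne, hb⟩ := (dist_eq_one u w).1 h
    constructor
    · rw [Set.ncard_eq_one]
      refine ⟨u, ?_⟩
      ext y
      simp only [Set.mem_ofPred_eq, Set.mem_singleton_iff, (hG_conn F).dist_eq_zero_iff]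
      constructor
      · exact fun e => e.2.symm
      · rintro rfl
        exact ⟨SimpleGraph.Adj.symm ⟨hne, hb⟩, rfl⟩
    · have : {y | (hG F).Adj w y ∧ (hG F).dist u y = 2} =
          {y | bf w y = 0} \ {y | bf w y = 0 ∧ bf u y = 0} := by
        ext y
        simp only [Set.mem_ofPred_eq, Set.mem_sdiff, not_and]
        constructor
        · rintro ⟨h1, h2⟩
          refine ⟨h1.2, fun _ h3 => ?_⟩
          rcases dist_cases u y with h | h | h | h
          · omega
          · omega
          · exact h.2.2.1 h3
          · omega
        · rintro ⟨h1, h2⟩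
          have h2 := h2 h1
          refine ⟨⟨?_, h1⟩, dist_two ?_ h2⟩
          · rintro rfl
            exact h2 hb
          · intro e
            have := fib_eq e w hb (by rw [bf_comm, h1, neg_zero])
            rw [this] at h2
            exact h2 (bf_self y)
      rw [this, Set.ncard_sdiff (fun y hy => hy.1), card_nb,
        card_common u w (adj_fib (F := F) ⟨hne, hb⟩)]
  · intro u w h
    have hc : u.2 ≠ w.2 ∧ bf u w ≠ 0 := by
      rcases dist_cases u w with h | h | h | h
      · omega
      · omega
      · exact ⟨h.2.1, h.2.2.1⟩
      · omega
    obtain ⟨hf, hb⟩ := hc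
    constructor
    · rw [← card_common u w hf]
      congr 1
      ext y
      simp only [Set.mem_ofPred_eq, dist_eq_one, hG_adj]
      constructor
      · exact fun e => ⟨e.1.2, e.2.2⟩
      · rintro ⟨h1, h2⟩
        refine ⟨⟨?_, h1⟩, ?_, h2⟩
        · rintro rfl
          exact hb h2
        · rintro rfl
          rw [bf_comm, h1, neg_zero] at hb
          exact hb rfl
    · rw [Set.ncard_eq_one]
      refine ⟨(w.1 + w.2.1 * u.2.2 - w.2.2 * u.2.1, u.2), ?_⟩
      ext y
      simp only [Set.mem_ofPred_eq, Set.mem_singleton_iff]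
      constructor
      · rintro ⟨h1, h2⟩
        have hfy : u.2 = y.2 := by
          rcases dist_cases u y with h | h | h | h
          · omega
          · omega
          · omega
          · exact h.2.1
        have h3 := h1.2
        simp only [bf] at h3
        refine Prod.ext ?_ hfy.symm
        simp only [hfy]
        linear_combination -h3
      · intro hy
        have hy2 : y.2 = u.2 := by rw [hy]
        have hwy : bf w y = 0 := by rw [hy]; simp only [bf]; ring
        refine ⟨⟨?_, hwy⟩, dist_three hy2.symm ?_⟩
        · rintro rfl
          exact hf hy2.symm
        · rintro rfl
          rw [bf_comm, hwy, neg_zero] at hb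
          exact hb rfl
  · intro u w h
    have hc : u ≠ w ∧ u.2 = w.2 := by
      rcases dist_cases u w with h | h | h | h
      · omega
      · omega
      · omega
      · exact ⟨h.1, h.2.1⟩
    obtain ⟨hn, hf⟩ := hc
    constructor
    · rw [← deg w]
      congr 1
      ext y
      simp only [Set.mem_ofPred_eq]
      constructor
      · exact fun e => e.1
      · intro hy
        refine ⟨hy, dist_two ?_ ?_⟩
        · rw [hf]; exact adj_fib (F := F) hy
        · exact fun e => hn (fib_eq hf y e hy.2)
    · rw [Set.ncard_eq_zero]
      ext y
      simp only [Set.mem_ofPred_eq, Set.mem_empty_iff_false, iff_false, not_and]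
      intro _ h4
      rcases dist_cases u y with h | h | h | h <;> omega


theorem iso_dist {V W : Type*} {G : SimpleGraph V} {H : SimpleGraph W} (e : G ≃g H)
    (hG : G.Connected) (hH : H.Connected) (x y : V) : H.dist (e x) (e y) = G.dist x y := by
  apply le_antisymm
  · obtain ⟨p, hp⟩ := hG.exists_walk_length_eq_dist x y
    rw [← hp]
    simpa using SimpleGraph.dist_le (p.map e.toHom)
  · obtain ⟨p, hp⟩ := hH.exists_walk_length_eq_dist (e x) (e y)
    rw [← hp]
    have := SimpleGraph.dist_le ((p.map e.symm.toHom).copy (e.symm_apply_apply x)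
      (e.symm_apply_apply y))
    simpa using this

theorem iso_drg {V W : Type*} {G : SimpleGraph V} {H : SimpleGraph W} (e : G ≃g H)
    {b0 b1 b2 c1 c2 c3 : ℕ} (h : IsDRG3 G b0 b1 b2 c1 c2 c3) : IsDRG3 H b0 b1 b2 c1 c2 c3 := by
  obtain ⟨h1, h2, h3, h4, h5, h6, h7⟩ := h
  have hH : H.Connected := e.connected_iff.1 h1
  have hd := iso_dist e h1 hH
  have hs : ∀ u w k, {y | H.Adj (e w) y ∧ H.dist (e u) y = k}.ncard =
      {y | G.Adj w y ∧ G.dist u y = k}.ncard := by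
    intro u w k
    rw [← Set.ncard_image_of_injective _ e.injective]
    congr 1
    ext y
    obtain ⟨y, rfl⟩ := e.surjective y
    simp [hd, e.map_adj_iff]
  refine ⟨hH, ?_, ?_, ?_, ?_, ?_, ?_⟩
  · intro u w
    obtain ⟨u, rfl⟩ := e.surjective u
    obtain ⟨w, rfl⟩ := e.surjective w
    rw [hd]; exact h2 u w
  · obtain ⟨u, w, h⟩ := h3
    exact ⟨e u, e w, by rw [hd, h]⟩
  · intro x
    obtain ⟨x, rfl⟩ := e.surjective x
    rw [← h4 x, ← Set.ncard_image_of_injective _ e.injective]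
    congr 1
    ext y
    obtain ⟨y, rfl⟩ := e.surjective y
    simp [e.map_adj_iff]
  all_goals
    intro u w
    obtain ⟨u, rfl⟩ := e.surjective u
    obtain ⟨w, rfl⟩ := e.surjective w
    rw [hd, hs, hs]
  · exact h5 u w
  · exact h6 u w
  · exact h7 u w

theorem exists_iso (F : Type) [Field F] (v : ℙ F (Fin 4 → F)) :
    Nonempty (hG F ≃g (spGraph F).induce {x | x ≠ v ∧ ¬ (spGraph F).Adj v x}) := by
  induction v using Projectivization.ind with | h v hv =>
  obtain ⟨w, f, g, hvw, hvf, hvg, hwf, hwg, hfg, hx⟩ := exists_basis v hv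
  have mem : ∀ (x : Fin 4 → F) (h0 : x ≠ 0), Projectivization.mk F x h0 ∈
      {x | x ≠ Projectivization.mk F v hv ∧ ¬ (spGraph F).Adj (Projectivization.mk F v hv) x} ↔
      sympForm v x ≠ 0 := by
    intro x h0
    rw [Set.mem_ofPred_eq, sp_adj]
    constructor
    · rintro ⟨h1, h2⟩ h3
      exact h2 ⟨h1.symm, h3⟩
    · intro h
      refine ⟨fun e => ?_, fun e => h e.2⟩
      obtain ⟨a, ha⟩ := (Projectivization.mk_eq_mk_iff' F x v h0 hv).1 e
      apply h
      rw [← ha]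
      simp [sympForm]; ring
  let φ : F × F × F → (Fin 4 → F) := fun p => p.1 • v + w + p.2.1 • f + p.2.2 • g
  have hB : ∀ p r, sympForm (φ p) (φ r) = bf p r := by
    intro p r
    simp only [φ, sympForm, bf, Pi.add_apply, Pi.smul_apply, smul_eq_mul] at *
    linear_combination (p.1 - r.1) * hvw + (p.1 * r.2.1 - r.1 * p.2.1) * hvf +
      (p.1 * r.2.2 - r.1 * p.2.2) * hvg + (r.2.1 - p.2.1) * hwf + (r.2.2 - p.2.2) * hwg +
      (p.2.1 * r.2.2 - p.2.2 * r.2.1) * hfg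
  have hv1 : ∀ p, sympForm v (φ p) = 1 := by
    intro p
    simp only [φ, sympForm, Pi.add_apply, Pi.smul_apply, smul_eq_mul] at *
    linear_combination hvw + p.2.1 * hvf + p.2.2 * hvg
  have hw1 : ∀ p, sympForm (φ p) w = p.1 := by
    intro p
    simp only [φ, sympForm, Pi.add_apply, Pi.smul_apply, smul_eq_mul] at *
    linear_combination p.1 * hvw - p.2.1 * hwf - p.2.2 * hwg
  have hg1 : ∀ p, sympForm (φ p) g = p.2.1 := by
    intro p
    simp only [φ, sympForm, Pi.add_apply, Pi.smul_apply, smul_eq_mul] at *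
    linear_combination p.1 * hvg + hwg + p.2.1 * hfg
  have hf1 : ∀ p, sympForm f (φ p) = p.2.2 := by
    intro p
    simp only [φ, sympForm, Pi.add_apply, Pi.smul_apply, smul_eq_mul] at *
    linear_combination -p.1 * hvf - hwf + p.2.2 * hfg
  have h0 : ∀ p, φ p ≠ 0 := by
    intro p e
    have := hv1 p
    rw [e] at this
    simp [sympForm] at this
  let ψ : F × F × F → {x | x ≠ Projectivization.mk F v hv ∧
      ¬ (spGraph F).Adj (Projectivization.mk F v hv) x} :=
    fun p => ⟨Projectivization.mk F (φ p) (h0 p), (mem _ _).2 (by rw [hv1]; exact one_ne_zero)⟩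
  have inj : Function.Injective ψ := by
    intro p r h
    have h := congrArg Subtype.val h
    obtain ⟨a, ha⟩ := (Projectivization.mk_eq_mk_iff' F _ _ (h0 p) (h0 r)).1 h
    have ha1 : a = 1 := by
      have h1 := sf_smul 1 a v (φ r)
      rw [ha, one_smul, hv1, hv1] at h1
      simpa using h1.symm
    rw [ha1, one_smul] at ha
    refine Prod.ext ?_ (Prod.ext ?_ ?_)
    · rw [← hw1, ← hw1 r, ha]
    · rw [← hg1, ← hg1 r, ha]
    · rw [← hf1, ← hf1 r, ha]
  have surj : Function.Surjective ψ := by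
    rintro ⟨x, hxm⟩
    induction x using Projectivization.ind with | h x hx0 =>
    have hne := (mem x hx0).1 hxm
    have e := hx x
    refine ⟨((sympForm v x)⁻¹ * sympForm x w, (sympForm v x)⁻¹ * sympForm x g,
      (sympForm v x)⁻¹ * sympForm f x), Subtype.ext ?_⟩
    refine (Projectivization.mk_eq_mk_iff' F _ _ _ _).2 ⟨(sympForm v x)⁻¹, ?_⟩
    refine (congrArg (fun t => (sympForm v x)⁻¹ • t) e).trans ?_
    simp only [φ, smul_add, smul_smul, inv_mul_cancel₀ hne, one_smul]
  refine ⟨⟨Equiv.ofBijective ψ ⟨inj, surj⟩, ?_⟩⟩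
  intro p r
  rw [hG_adj, SimpleGraph.induce_adj]
  change (spGraph F).Adj (Projectivization.mk F (φ p) (h0 p)) (Projectivization.mk F (φ r) (h0 r))
    ↔ _
  rw [sp_adj, hB]
  have : Projectivization.mk F (φ p) (h0 p) = Projectivization.mk F (φ r) (h0 r) ↔ p = r :=
    ⟨fun h => inj (Subtype.ext h), fun h => by subst h; rfl⟩
  rw [Ne, this]

/-- for every vertex `v` of `Sp(4,q)`, the second subconstituent (the subgraph
induced on the `q³` vertices distinct from `v` and not adjacent to `v`) is distance-regular
with intersection array `{q²−1, q²−q, 1; 1, q, q²−1}`. -/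
theorem spGraph_secondSubconstituent_DRG (F : Type) [Field F] [Fintype F] (q : ℕ)
    (hq : Fintype.card F = q) (v : ℙ F (Fin 4 → F)) :
    {x : ℙ F (Fin 4 → F) | x ≠ v ∧ ¬ (spGraph F).Adj v x}.ncard = q ^ 3 ∧
    IsDRG3 ((spGraph F).induce {x | x ≠ v ∧ ¬ (spGraph F).Adj v x})
      (q ^ 2 - 1) (q ^ 2 - q) 1 1 q (q ^ 2 - 1) := by

  obtain ⟨e⟩ := exists_iso F v
  refine ⟨?_, iso_drg e (hG_drg F q hq)⟩
  rw [← Nat.card_coe_set_eq, ← Nat.card_congr e.toEquiv]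
  simp [hq]
  ring
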